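/- arXiv:1807.11866 — 6 statements merged into one kernel-verified Lean document; each statement's English description precedes it below -/
import Mathlib

section
/- Let P = ![![0,−1],![1,0]], R(a) = ![![cos a, −sin a],![sin a, cos a]], r̂ ∈ ℝ², c ∈ ℝ, Q = c · r̂ r̂ᵀ, and φ ∈ ℝ. Then the Jacobian matrix J = R(a)(I + φ P Q) has determinant det J = 1. -/
/-- The 2×2 quarter-turn rotation matrix `P = R(π/2)`. -/
def quarterTurn : Matrix (Fin 2) (Fin 2) ℝ := !![0, -1; 1, 0]

/-- The 2×2 rotation matrix by angle `a`. -/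
noncomputable def rotMatrix (a : ℝ) : Matrix (Fin 2) (Fin 2) ℝ :=
  !![Real.cos a, -Real.sin a; Real.sin a, Real.cos a]

/-- **Unimodularity of the Jacobian of the rotational domain map.**
Let `P = ![![0,-1],![1,0]]`, `R a` the rotation by angle `a`, `r̂ ∈ ℝ²`, `c ∈ ℝ`,
`Q = c • r̂ r̂ᵀ`, and `φ ∈ ℝ`.  Then the Jacobian matrix `J = R a * (I + φ • (P * Q))`
has determinant `det J = 1`. -/
theorem det_rot_jacobian (a : ℝ) (r : Fin 2 → ℝ) (c : ℝ)
    (Q : Matrix (Fin 2) (Fin 2) ℝ) (hQ : ∀ i j, Q i j = c * r i * r j)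
    (φ : ℝ) :
    (rotMatrix a * (1 + φ • (quarterTurn * Q))).det = 1 := by
  have hR : (rotMatrix a).det = 1 := by
    rw [rotMatrix, Matrix.det_fin_two_of]
    linear_combination Real.sin_sq_add_cos_sq a
  -- `P r` is orthogonal to `r`, so `P * Q` is nilpotent of rank at most one and
  -- `I + φ P Q` is a shear.
  have hS : (1 + φ • (quarterTurn * Q)).det = 1 := by
    simp [Matrix.det_fin_two, quarterTurn, Matrix.vecMul, dotProduct, hQ]
    ring
  rw [Matrix.det_mul, hR, hS, one_mul]
end

section
/- Let P = ![![0,−1],![1,0]], R(a) = ![![cos a, −sin a],![sin a, cos a]], r̂ ∈ ℝ², c ∈ ℝ, Q = c · r̂ r̂ᵀ, φ ∈ ℝ, and J = R(a)(I + φ P Q). Then J is invertible with inverse J⁻¹ = (I − φ P Q) R(a)ᵀ; that is, J · ((I − φ P Q) R(a)ᵀ) = I = ((I − φ P Q) R(a)ᵀ) · J. -/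
/-!
Since `P` is skew-symmetric, `r̂ᵀ P r̂ = 0`, so `P Q` squares to zero
(`quarterTurn_mul_sq_eq_zero`) and `I + φ P Q` has inverse `I - φ P Q`. The rotation is
orthogonal (`rotMatrix_mul_transpose`), which gives the inverse of the product.
-/

open scoped Matrix

/-- `(PQ)² = c² (r̂ᵀ P r̂) P r̂ r̂ᵀ = 0`, since `P` is skew-symmetric. -/
lemma quarterTurn_mul_sq_eq_zero (r : Fin 2 → ℝ) (c : ℝ)
    (Q : Matrix (Fin 2) (Fin 2) ℝ) (hQ : ∀ i j, Q i j = c * r i * r j) :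
    (quarterTurn * Q) * (quarterTurn * Q) = 0 := by
  ext i j
  fin_cases i <;> fin_cases j <;>
    simp [quarterTurn, Matrix.vecMul, dotProduct, Matrix.mul_apply, Fin.sum_univ_two, hQ] <;> ring

lemma rotMatrix_mul_transpose (a : ℝ) : rotMatrix a * (rotMatrix a)ᵀ = 1 := by
  ext i j
  fin_cases i <;> fin_cases j <;>
    simp [rotMatrix, Matrix.mul_apply, Fin.sum_univ_two] <;>
    nlinarith [Real.sin_sq_add_cos_sq a]

/-- **Explicit inverse of the Jacobian (Sherman–Morrison).**
Let `P = ![![0,-1],![1,0]]`, `R a` the rotation by angle `a`, `r̂ ∈ ℝ²`, `c ∈ ℝ`,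
`Q = c • r̂ r̂ᵀ`, `φ ∈ ℝ`, and `J = R a * (I + φ • (P * Q))`.  Then `J` is invertible
with inverse `J⁻¹ = (I - φ • (P * Q)) * (R a)ᵀ`; that is,
`J * ((I - φ • (P * Q)) * (R a)ᵀ) = I = ((I - φ • (P * Q)) * (R a)ᵀ) * J`. -/
theorem rot_jacobian_inverse (a : ℝ) (r : Fin 2 → ℝ) (c : ℝ)
    (Q : Matrix (Fin 2) (Fin 2) ℝ) (hQ : ∀ i j, Q i j = c * r i * r j)
    (φ : ℝ) :
    (rotMatrix a * (1 + φ • (quarterTurn * Q))) *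
        ((1 - φ • (quarterTurn * Q)) * (rotMatrix a)ᵀ) = 1 ∧
    ((1 - φ • (quarterTurn * Q)) * (rotMatrix a)ᵀ) *
        (rotMatrix a * (1 + φ • (quarterTurn * Q))) = 1 := by
  have hN : (1 + φ • (quarterTurn * Q)) * (1 - φ • (quarterTurn * Q)) = 1 := by
    rw [add_mul, mul_sub, mul_sub, smul_mul_smul_comm,
      quarterTurn_mul_sq_eq_zero r c Q hQ]
    simp
  have h : (rotMatrix a * (1 + φ • (quarterTurn * Q))) *
      ((1 - φ • (quarterTurn * Q)) * (rotMatrix a)ᵀ) = 1 := by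
    rw [mul_assoc, ← mul_assoc (1 + φ • (quarterTurn * Q)), hN, one_mul,
      rotMatrix_mul_transpose]
  -- For square matrices over a commutative ring a right inverse is a left inverse.
  exact ⟨h, mul_eq_one_comm.mp h⟩
end

section
/- Let P = ![![0,−1],![1,0]], R(a) = ![![cos a, −sin a],![sin a, cos a]], r̂ ∈ ℝ², c ∈ ℝ, Q = c · r̂ r̂ᵀ, φ ∈ ℝ, and J = R(a)(I + φ P Q). Then J⁻¹ J⁻ᵀ = I + φ (Q P − P Q) − φ² P Q² P, where J⁻¹ = (I − φ P Q) R(a)ᵀ and J⁻ᵀ denotes the transpose of J⁻¹. -/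
/-!
Since `Rᵀ R = 1`, the rotation cancels in `J⁻¹ J⁻ᵀ`, leaving `(1 - φ P Q) (1 - φ P Q)ᵀ`.
As `Q` is symmetric and `Pᵀ = -P`, the second factor is `1 + φ Q P`; expanding the product
gives the formula.
-/

open scoped Matrix

theorem rotMatrix_transpose_mul_self (a : ℝ) : (rotMatrix a)ᵀ * rotMatrix a = 1 := by
  ext i j
  fin_cases i <;> fin_cases j <;>
    simp [rotMatrix, Matrix.mul_apply, Fin.sum_univ_two] <;>
    linarith [Real.sin_sq_add_cos_sq a]

theorem quarterTurn_transpose : quarterTurnᵀ = -quarterTurn := by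
  ext i j
  fin_cases i <;> fin_cases j <;> simp [quarterTurn]

/-- **Affine structure of `J⁻¹ J⁻ᵀ`.**
Let `P = ![![0,-1],![1,0]]`, `R a` the rotation by angle `a`, `r̂ ∈ ℝ²`, `c ∈ ℝ`,
`Q = c • r̂ r̂ᵀ`, `φ ∈ ℝ`, and `J = R a * (I + φ • (P * Q))` with inverse
`J⁻¹ = (I - φ • (P * Q)) * (R a)ᵀ`.  Then
`J⁻¹ * (J⁻¹)ᵀ = I + φ • (Q * P - P * Q) - φ² • (P * Q² * P)`. -/
theorem rot_jacobian_inv_mul_invT (a : ℝ) (r : Fin 2 → ℝ) (c : ℝ)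
    (Q : Matrix (Fin 2) (Fin 2) ℝ) (hQ : ∀ i j, Q i j = c * r i * r j)
    (φ : ℝ) :
    ((1 - φ • (quarterTurn * Q)) * (rotMatrix a)ᵀ) *
        ((1 - φ • (quarterTurn * Q)) * (rotMatrix a)ᵀ)ᵀ
      = 1 + φ • (Q * quarterTurn - quarterTurn * Q)
          - (φ ^ 2) • (quarterTurn * Q ^ 2 * quarterTurn) := by
  have hQT : Qᵀ = Q := by
    ext i j
    rw [Matrix.transpose_apply, hQ, hQ]
    ring
  calc _ = (1 - φ • (quarterTurn * Q)) * ((rotMatrix a)ᵀ * rotMatrix a) *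
        (1 - φ • (quarterTurn * Q))ᵀ := by
        simp only [Matrix.transpose_mul, Matrix.transpose_transpose, Matrix.mul_assoc]
    _ = (1 - φ • (quarterTurn * Q)) * (1 + φ • (Q * quarterTurn)) := by
        rw [rotMatrix_transpose_mul_self, mul_one, Matrix.transpose_sub, Matrix.transpose_one,
          Matrix.transpose_smul, Matrix.transpose_mul, hQT, quarterTurn_transpose, mul_neg,
          smul_neg, sub_neg_eq_add]
    _ = _ := by
        simp only [sub_mul, mul_add, one_mul, mul_one, smul_mul_assoc, mul_smul_comm, smul_smul,
          smul_sub, pow_two, mul_assoc]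
        abel
end

section
/- Let P = ![![0,−1],![1,0]], let θ, φ ∈ ℝ, let r̂ ∈ ℝ², c ∈ ℝ, and Q = c · r̂ r̂ᵀ. Define R_i = (θ^i / i!) P^i for i ≥ 0 and R_{−1} = 0. Then the series Σ_{i=0}^∞ φ^i (R_i + R_{i−1} Q P) converges in the space of 2×2 real matrices, and its sum equals R(φθ)(I + φ Q P), which is the inverse transpose J⁻ᵀ of the Jacobian J = R(φθ)(I + φ P Q). This is the affine (power-series in φ) representation of J⁻ᵀ. -/
/-!
Since `P ^ 2 = -1`, the even and odd parts of the exponential series of `φθ P` are the cosine and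
sine series, so `∑ φ^i R_i = cos (φθ) + sin (φθ) P = R(φθ)` (`hasSum_rotCoeff`). The terms with
`R_{i-1}` form the same series, shifted by one index and multiplied by `φ Q P` on the right.

For the inverse transpose, `R(φθ)` is orthogonal, and `Q P Q = 0` because `Q` is a multiple of
`r rᵀ` and `rᵀ P r = 0`. Hence `(1 + φ P Q)(1 - φ P Q) = 1`, and `1 - φ P Q = (1 + φ Q P)ᵀ`.
-/

open scoped Matrix

/-- `R_i = (θ^i / i!) • P^i`, the `i`-th coefficient matrix of the series of `R(φθ)`
in powers of `φ`, with the convention `R_{-1} = 0` (index shifted: `Rm1 0 = 0`,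
`Rm1 (i+1) = R_i`). -/
noncomputable def rotCoeff (θ : ℝ) (i : ℕ) : Matrix (Fin 2) (Fin 2) ℝ :=
  (θ ^ i / (Nat.factorial i : ℝ)) • quarterTurn ^ i

/-- The shifted coefficient `R_{i-1}`, with `R_{-1} = 0`. -/
noncomputable def rotCoeffShift (θ : ℝ) : ℕ → Matrix (Fin 2) (Fin 2) ℝ
  | 0 => 0
  | (i + 1) => rotCoeff θ i

lemma quarterTurn_sq : quarterTurn ^ 2 = (-1 : ℝ) • (1 : Matrix (Fin 2) (Fin 2) ℝ) := by
  ext i j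
  fin_cases i <;> fin_cases j <;> simp [quarterTurn, pow_two]

lemma rotMatrix_eq (a : ℝ) :
    rotMatrix a = Real.cos a • (1 : Matrix (Fin 2) (Fin 2) ℝ) + Real.sin a • quarterTurn := by
  ext i j
  fin_cases i <;> fin_cases j <;> simp [quarterTurn, rotMatrix]

lemma hasSum_rotCoeff (θ φ : ℝ) :
    HasSum (fun i : ℕ => φ ^ i • rotCoeff θ i) (rotMatrix (φ * θ)) := by
  rw [rotMatrix_eq]
  refine HasSum.even_add_odd ?_ ?_
  · convert (Real.hasSum_cos (φ * θ)).smul_const (1 : Matrix (Fin 2) (Fin 2) ℝ) using 1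
    funext n
    rw [rotCoeff, pow_mul quarterTurn, quarterTurn_sq, smul_pow, one_pow, smul_smul, smul_smul]
    congr 1
    ring
  · convert (Real.hasSum_sin (φ * θ)).smul_const quarterTurn using 1
    funext n
    rw [rotCoeff, pow_succ quarterTurn, pow_mul quarterTurn, quarterTurn_sq, smul_pow, one_pow,
      smul_mul_assoc, one_mul, smul_smul, smul_smul]
    congr 1
    ring

lemma hasSum_rotCoeffShift (θ φ : ℝ) :
    HasSum (fun i : ℕ => φ ^ i • rotCoeffShift θ i) (φ • rotMatrix (φ * θ)) := by
  rw [← hasSum_nat_add_iff' 1]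
  simpa [rotCoeffShift, pow_succ', mul_smul] using (hasSum_rotCoeff θ φ).const_smul φ

/-- `(1 + φ P Q)⁻¹ = (1 + φ Q P)ᵀ` when `Q = c r rᵀ`. -/
lemma shear_mul_transpose (φ c : ℝ) (r : Fin 2 → ℝ)
    (Q : Matrix (Fin 2) (Fin 2) ℝ) (hQ : ∀ i j, Q i j = c * r i * r j) :
    (1 + φ • (quarterTurn * Q)) * (1 + φ • (Q * quarterTurn))ᵀ = 1 := by
  ext i j
  fin_cases i <;> fin_cases j <;>
    simp [quarterTurn, Matrix.mul_apply, Fin.sum_univ_two, Matrix.one_apply, Matrix.vecMul, dotProduct,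
      hQ] <;> ring

/-- **Affine (power-series) representation of `J⁻ᵀ`.**
Let `P = ![![0,-1],![1,0]]`, `θ, φ ∈ ℝ`, `r̂ ∈ ℝ²`, `c ∈ ℝ`, `Q = c • r̂ r̂ᵀ`, and
`R_i = (θ^i / i!) • P^i` with `R_{-1} = 0`.  Then the series
`∑ i, φ^i • (R_i + R_{i-1} * (Q * P))` converges in the space of 2×2 real matrices, with
sum `R(φθ) * (I + φ • (Q * P))`, and this sum is the inverse transpose `J⁻ᵀ` of the
Jacobian `J = R(φθ) * (I + φ • (P * Q))`. -/
theorem hasSum_jacobian_inv_transpose (θ φ : ℝ) (r : Fin 2 → ℝ) (c : ℝ)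
    (Q : Matrix (Fin 2) (Fin 2) ℝ) (hQ : ∀ i j, Q i j = c * r i * r j) :
    HasSum (fun i : ℕ =>
        (φ ^ i) • (rotCoeff θ i + rotCoeffShift θ i * (Q * quarterTurn)))
      (rotMatrix (φ * θ) * (1 + φ • (Q * quarterTurn))) ∧
    rotMatrix (φ * θ) * (1 + φ • (Q * quarterTurn))
      = ((rotMatrix (φ * θ) * (1 + φ • (quarterTurn * Q)))⁻¹)ᵀ := by
  constructor
  · have h := (hasSum_rotCoeff θ φ).add
      ((hasSum_rotCoeffShift θ φ).mul_right (Q * quarterTurn))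
    simpa only [smul_add, mul_add, mul_one, smul_mul_assoc, mul_smul_comm] using h
  · rw [Matrix.inv_eq_right_inv (B := (rotMatrix (φ * θ) * (1 + φ • (Q * quarterTurn)))ᵀ),
      Matrix.transpose_transpose]
    rw [Matrix.transpose_mul, mul_assoc, ← mul_assoc (1 + φ • (quarterTurn * Q)),
      shear_mul_transpose φ c r Q hQ, one_mul, rotMatrix_mul_transpose]
end

section
/- Let θ : ℝ → ℝ be differentiable, let φ ∈ ℝ, and define the domain map F : ℝ² → ℝ² by F(r̂) = R(φ θ(‖r̂‖)) r̂, where R(a) = ![![cos a, −sin a],![sin a, cos a]] and ‖·‖ is the Euclidean norm. Then at every point r̂ ≠ 0, F is differentiable and its Jacobian (Fréchet derivative, as a 2×2 matrix) is D F(r̂) = R(a) (I + φ P Q), where r = ‖r̂‖, a = φ θ(r), P = ![![0,−1],![1,0]], and Q = (θ'(r)/r) · r̂ r̂ᵀ. -/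
/-- Away from the origin the Euclidean norm has gradient `x / ‖x‖`; obtained by differentiating
`√(‖y‖ ^ 2)`. -/
lemma hasFDerivAt_norm_of_ne_zero {E : Type*} [NormedAddCommGroup E] [InnerProductSpace ℝ E]
    {x : E} (hx : x ≠ 0) :
    HasFDerivAt (fun y : E => ‖y‖) (‖x‖⁻¹ • innerSL ℝ x) x := by
  have hpos : 0 < ‖x‖ := norm_pos_iff.mpr hx
  have h := (hasStrictFDerivAt_norm_sq x).hasFDerivAt.sqrt (by positivity)
  simp only [Real.sqrt_sq (norm_nonneg _)] at h
  refine h.congr_fderiv ?_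
  ext v
  simp
  field_simp

/-- **Jacobian of the radius-dependent rotation map.**
Let `θ : ℝ → ℝ` be differentiable, `φ ∈ ℝ`, and define the domain map
`F : ℝ² → ℝ²` (with the Euclidean norm, i.e. on `EuclideanSpace ℝ (Fin 2)`) by
`F r̂ = R (φ * θ ‖r̂‖) r̂`, where `R a` is the rotation matrix by angle `a`.  Then at every
point `r̂ ≠ 0`, `F` is differentiable and its Fréchet derivative, identified with its 2×2
Jacobian matrix, is `D F(r̂) = R a * (I + φ • (P * Q))`, where `r = ‖r̂‖`, `a = φ * θ r`,
`P = ![![0,-1],![1,0]]`, and `Q = (θ' r / r) • r̂ r̂ᵀ`. -/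
theorem hasFDerivAt_radial_rotation_map
    (θ : ℝ → ℝ) (hθ : Differentiable ℝ θ) (φ : ℝ)
    (F : EuclideanSpace ℝ (Fin 2) → EuclideanSpace ℝ (Fin 2))
    (hF : ∀ x, F x = Matrix.toEuclideanLin (rotMatrix (φ * θ ‖x‖)) x)
    (x : EuclideanSpace ℝ (Fin 2)) (hx : x ≠ 0) :
    HasFDerivAt F
      (LinearMap.toContinuousLinearMap
        (Matrix.toEuclideanLin
          (rotMatrix (φ * θ ‖x‖) *
            (1 + φ • (quarterTurn *
              Matrix.of (fun i j => (deriv θ ‖x‖ / ‖x‖) * x i * x j))))))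
      x := by
  -- The derivative of the rotation angle `y ↦ φ * θ ‖y‖`.
  have hα : HasFDerivAt (fun y : EuclideanSpace ℝ (Fin 2) => φ * θ ‖y‖)
      (φ • (deriv θ ‖x‖ • (‖x‖⁻¹ • innerSL ℝ x))) x :=
    ((hθ ‖x‖).hasDerivAt.comp_hasFDerivAt x (hasFDerivAt_norm_of_ne_zero hx)).const_mul φ
  have hcoord (i : Fin 2) : HasFDerivAt (fun y : EuclideanSpace ℝ (Fin 2) => y i)
      (EuclideanSpace.proj i : EuclideanSpace ℝ (Fin 2) →L[ℝ] ℝ) x :=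
    (EuclideanSpace.proj i : EuclideanSpace ℝ (Fin 2) →L[ℝ] ℝ).hasFDerivAt
  have hF0 : (fun y => F y 0) =
      fun y => Real.cos (φ * θ ‖y‖) * y 0 - Real.sin (φ * θ ‖y‖) * y 1 := by
    funext y
    simp [hF, rotMatrix, Matrix.toLpLin_apply, dotProduct, Fin.sum_univ_two]
    ring
  have hF1 : (fun y => F y 1) =
      fun y => Real.sin (φ * θ ‖y‖) * y 0 + Real.cos (φ * θ ‖y‖) * y 1 := by
    funext y
    simp [hF, rotMatrix, Matrix.toLpLin_apply, dotProduct, Fin.sum_univ_two]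
  rw [← hasFDerivWithinAt_univ, hasFDerivWithinAt_euclidean]
  intro i
  rw [hasFDerivWithinAt_univ]
  fin_cases i
  · change HasFDerivAt (fun y => F y 0) _ x
    rw [hF0]
    refine ((hα.cos.mul (hcoord 0)).sub (hα.sin.mul (hcoord 1))).congr_fderiv ?_
    ext v
    simp [rotMatrix, quarterTurn, Matrix.toLpLin_apply, Matrix.vecMul, dotProduct,
      Matrix.vecHead, Matrix.vecTail, Fin.sum_univ_two, PiLp.inner_apply]
    ring
  · change HasFDerivAt (fun y => F y 1) _ x
    rw [hF1]
    refine ((hα.sin.mul (hcoord 0)).add (hα.cos.mul (hcoord 1))).congr_fderiv ?_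
    ext v
    simp [rotMatrix, quarterTurn, Matrix.toLpLin_apply, Matrix.vecMul, dotProduct,
      Matrix.vecHead, Matrix.vecTail, Fin.sum_univ_two, PiLp.inner_apply]
    ring
end

section
/- Piola identity / solenoidality preservation: let d ≥ 1, let Φ : ℝ^d → ℝ^d be twice continuously differentiable with DΦ(x) invertible for every x, and let û : ℝ^d → ℝ^d be continuously differentiable. Define the Piola transform u along Φ by u(Φ(x)) = (det DΦ(x))⁻¹ · DΦ(x) û(x); equivalently, suppose u : ℝ^d → ℝ^d is differentiable and satisfies u(Φ(x)) = (det DΦ(x))⁻¹ DΦ(x) û(x) for all x. Then for every x ∈ ℝ^d, det DΦ(x) · (div u)(Φ(x)) = (div û)(x), where div v = Σ_{i=1}^d ∂_i v_i. In particular, if û is divergence-free then so is u on the image of Φ. -/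
/-!
Write `A = DΦ(x)`, `J = det A`, `a = û(x)`, and let `H = D²Φ(x)`. Differentiating the identity
`J · (u ∘ Φ) = DΦ û` in the direction `w` gives
`(DJ w) u(Φ x) + J Du(A w) = H(w, a) + A (Dû w)`.
Multiplying by `A⁻¹` and taking the trace over `w`, the term with `Du` becomes `J div u` (cyclicity
of the trace) and the term with `Dû` becomes `div û`. By the symmetry of `H`, the term with `H`
becomes `tr (A⁻¹ H(a, ·))`, while the first term becomes `J⁻¹ DJ a`. These two agree by Jacobi's
formula `DJ a = tr (adj(A) H(a, ·))` (`hasFDerivAt_det_jacobianMatrix`), and cancel.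
-/

/-- The Jacobian matrix of a map `v : ℝ^d → ℝ^d` at `x`: the Fréchet derivative
identified with a `d × d` real matrix. -/
noncomputable def jacobianMatrix {d : ℕ} (v : (Fin d → ℝ) → (Fin d → ℝ))
    (x : Fin d → ℝ) : Matrix (Fin d) (Fin d) ℝ :=
  LinearMap.toMatrix' (fderiv ℝ v x).toLinearMap

/-- The divergence `div v = ∑ i, ∂ᵢ vᵢ` of a vector field `v : ℝ^d → ℝ^d`,
i.e. the trace of its Jacobian matrix. -/
noncomputable def divergence {d : ℕ} (v : (Fin d → ℝ) → (Fin d → ℝ))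
    (x : Fin d → ℝ) : ℝ :=
  (jacobianMatrix v x).trace

/-- Jacobi's formula for the determinant, applied to the Jacobian matrix of a `C²` map. -/
lemma hasFDerivAt_det_jacobianMatrix {d : ℕ} {Φ : (Fin d → ℝ) → (Fin d → ℝ)}
    (hΦ : ContDiff ℝ 2 Φ) (x : Fin d → ℝ) :
    ∃ J' : (Fin d → ℝ) →L[ℝ] ℝ,
      HasFDerivAt (fun y => (jacobianMatrix Φ y).det) J' x ∧
      ∀ w, J' w = ((jacobianMatrix Φ x).adjugate *
        LinearMap.toMatrix' (fderiv ℝ (fderiv ℝ Φ) x w).toLinearMap).trace := by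
  have hD : HasFDerivAt (fderiv ℝ Φ) (fderiv ℝ (fderiv ℝ Φ) x) x :=
    ((hΦ.fderiv_right (m := 1) (by norm_num)).differentiable (by norm_num) x).hasFDerivAt
  -- The determinant as a continuous multilinear function of the rows.
  let D : ContinuousMultilinearMap ℝ (fun _ : Fin d => Fin d → ℝ) ℝ :=
    { Matrix.detRowAlternating.toMultilinearMap with
      cont := by
        change Continuous fun M : Matrix (Fin d) (Fin d) ℝ => M.det
        exact continuous_id.matrix_det }
  let R : Fin d → (Fin d → ℝ) →L[ℝ] (Fin d → ℝ) := fun i =>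
    ContinuousLinearMap.pi fun j =>
      (ContinuousLinearMap.proj i).comp
        ((ContinuousLinearMap.apply ℝ (Fin d → ℝ) (Pi.single j (1 : ℝ))).comp
          (fderiv ℝ (fderiv ℝ Φ) x))
  have hrow : ∀ i, HasFDerivAt (fun y => jacobianMatrix Φ y i) (R i) x := by
    intro i
    refine hasFDerivAt_pi.2 fun j => ?_
    have h := ((ContinuousLinearMap.proj (R := ℝ) (φ := fun _ : Fin d => ℝ) i).comp
      (ContinuousLinearMap.apply ℝ (Fin d → ℝ)
        (Pi.single j (1 : ℝ) : Fin d → ℝ))).hasFDerivAt.comp x hD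
    have hfun : (fun y => jacobianMatrix Φ y i j) = fun y => fderiv ℝ Φ y (Pi.single j 1) i := by
      funext y
      simp [jacobianMatrix, LinearMap.toMatrix'_apply]
    rw [hfun]
    exact h
  refine ⟨_, HasFDerivAt.multilinear_comp (f := D) hrow, fun w => ?_⟩
  rw [Matrix.trace_mul_comm]
  simp only [Matrix.trace, Matrix.diag, sum_apply]
  refine Finset.sum_congr rfl fun i _ => ?_
  change ((jacobianMatrix Φ x).updateRow i (R i w)).det = _
  rw [← Matrix.cramer_transpose_apply, Matrix.cramer_eq_adjugate_mulVec,
    ← Matrix.adjugate_transpose, Matrix.mulVec_transpose]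
  simp [Matrix.vecMul, Matrix.mul_apply, dotProduct, R, LinearMap.toMatrix'_apply]

/-- **Piola identity / solenoidality preservation.**
Let `d ≥ 1`, let `Φ : ℝ^d → ℝ^d` be twice continuously differentiable with `DΦ(x)`
invertible for every `x`, and let `û : ℝ^d → ℝ^d` be continuously differentiable.
Suppose `u : ℝ^d → ℝ^d` is differentiable and is the Piola transform of `û` along `Φ`,
i.e. `u (Φ x) = (det DΦ(x))⁻¹ • DΦ(x) û(x)` for all `x`.  Then for every `x`,
`det DΦ(x) * (div u)(Φ x) = (div û)(x)`.  In particular, if `û` is divergence-free then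
so is `u` on the image of `Φ`. -/
theorem piola_transform_divergence
    {d : ℕ} (hd : 1 ≤ d)
    (Φ : (Fin d → ℝ) → (Fin d → ℝ)) (hΦ : ContDiff ℝ 2 Φ)
    (hJ : ∀ x, IsUnit (jacobianMatrix Φ x))
    (uhat : (Fin d → ℝ) → (Fin d → ℝ)) (huhat : ContDiff ℝ 1 uhat)
    (u : (Fin d → ℝ) → (Fin d → ℝ)) (hu : Differentiable ℝ u)
    (hpiola : ∀ x, u (Φ x)
      = ((jacobianMatrix Φ x).det)⁻¹ • (jacobianMatrix Φ x).mulVec (uhat x)) :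
    ∀ x, (jacobianMatrix Φ x).det * divergence u (Φ x) = divergence uhat x := by
  intro x
  obtain ⟨J', hJ', hJac⟩ := hasFDerivAt_det_jacobianMatrix hΦ x
  have hdet : ∀ y, (jacobianMatrix Φ y).det ≠ 0 := fun y =>
    ((Matrix.isUnit_iff_isUnit_det _).1 (hJ y)).ne_zero
  have hD : HasFDerivAt (fderiv ℝ Φ) (fderiv ℝ (fderiv ℝ Φ) x) x :=
    ((hΦ.fderiv_right (m := 1) (by norm_num)).differentiable (by norm_num) x).hasFDerivAt
  have hΦx : HasFDerivAt Φ (fderiv ℝ Φ x) x :=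
    (hΦ.differentiable (by norm_num) x).hasFDerivAt
  have huh : HasFDerivAt uhat (fderiv ℝ uhat x) x :=
    (huhat.differentiable (by norm_num) x).hasFDerivAt
  have hux : HasFDerivAt u (fderiv ℝ u (Φ x)) (Φ x) := (hu (Φ x)).hasFDerivAt
  have hsymm : IsSymmSndFDerivAt ℝ Φ x := hΦ.contDiffAt.isSymmSndFDerivAt (by simp)
  have hmul : ∀ y v, (jacobianMatrix Φ y).mulVec v = fderiv ℝ Φ y v := fun y v => by
    simp [jacobianMatrix, LinearMap.toMatrix'_mulVec]
  have heq : (fun y => (jacobianMatrix Φ y).det • u (Φ y)) = fun y => fderiv ℝ Φ y (uhat y) := by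
    funext y
    rw [hpiola y, smul_smul, mul_inv_cancel₀ (hdet y), one_smul, hmul]
  have h1 := hJ'.fun_smul (hux.comp x hΦx)
  have h2 := hD.clm_apply huh
  simp only [Function.comp_apply] at h1
  rw [heq] at h1
  have hkey := h1.unique h2
  set A := jacobianMatrix Φ x with hA
  set a := uhat x with ha
  set K := LinearMap.toMatrix' (fderiv ℝ (fderiv ℝ Φ) x a).toLinearMap with hK
  -- The differentiated identity in matrix form; symmetry of `D²Φ` turns `H(·, a)` into `K`.
  have hmat : Matrix.vecMulVec (u (Φ x)) (fun j => J' (Pi.single j 1))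
      + A.det • (jacobianMatrix u (Φ x) * A) = K + A * jacobianMatrix uhat x := by
    ext i j
    have h := congrFun (DFunLike.congr_fun hkey (Pi.single j (1 : ℝ))) i
    have hs := hsymm (Pi.single j (1 : ℝ)) a
    have hdetA : A.det = LinearMap.det (fderiv ℝ Φ x).toLinearMap := by
      simp [hA, jacobianMatrix]
    rw [hdetA] at h
    rw [hA, hK, jacobianMatrix, jacobianMatrix, jacobianMatrix, ← LinearMap.toMatrix'_comp,
      ← LinearMap.toMatrix'_comp]
    simp [Matrix.vecMulVec_apply, LinearMap.toMatrix'_apply, hs] at h ⊢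
    linarith
  have hAu : IsUnit A.det := (Matrix.isUnit_iff_isUnit_det _).1 (hJ x)
  have htr := congrArg (fun M => (A⁻¹ * M).trace) hmat
  have hinv : A⁻¹.mulVec (u (Φ x)) = A.det⁻¹ • a := by
    rw [hpiola x, Matrix.mulVec_smul, Matrix.mulVec_mulVec, Matrix.nonsing_inv_mul _ hAu,
      Matrix.one_mulVec]
  have hJa : (∑ j, a j * J' (Pi.single j 1)) = J' a := by
    conv_rhs => rw [← Finset.univ_sum_single a]
    rw [map_sum]
    refine Finset.sum_congr rfl fun j _ => ?_
    rw [← smul_eq_mul, ← map_smul, ← Pi.single_smul', smul_eq_mul, mul_one]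
  have hfirst : (A⁻¹ * Matrix.vecMulVec (u (Φ x)) (fun j => J' (Pi.single j 1))).trace
      = (A⁻¹ * K).trace := by
    rw [Matrix.mul_vecMulVec, hinv, Matrix.trace_vecMulVec, smul_dotProduct, dotProduct, hJa,
      hJac, Matrix.inv_def, Matrix.smul_mul, Matrix.trace_smul, Ring.inverse_eq_inv']
  simp only [Matrix.mul_add, Matrix.trace_add, hfirst] at htr
  rw [Matrix.mul_smul, Matrix.trace_smul, Matrix.trace_mul_comm A⁻¹ (_ * A), Matrix.mul_assoc,
    Matrix.mul_nonsing_inv _ hAu, Matrix.mul_one, ← Matrix.mul_assoc,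
    Matrix.nonsing_inv_mul _ hAu, Matrix.one_mul, smul_eq_mul] at htr
  exact add_left_cancel htr
end
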